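/- Let L be an even positive-definite lattice of rank n₀ ≥ 1 and φ a weakly holomorphic Jacobi form of weight 0 and index L whose Fourier coefficients f(n,l) vanish for all n < −1 and satisfy f(−1,l) = 0 for all l ≠ 0. Put a = f(−1,0) and c(0,l) = f(0,l) for l ∈ L^∨ (only finitely many of which are nonzero). Then Σ_{l∈L^∨} c(0,l) − (12/n₀) Σ_{l∈L^∨} c(0,l)·(l,l) − 24a = 0. -/

import Mathlib

/-!
The second-order Taylor coefficient of a weight-zero Jacobi form `φ` at `z = 0`, in the direction
of a vector `v`, is quasimodular of weight two (`secondCoeff_S`): under `τ ↦ -1/τ` it acquires an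
anomaly proportional to `(v,v) τ φ(τ,0)`. The function `φ(τ,0)` is modular of weight zero, and the
Eisenstein series `E₂ = 1 - 24 q - ⋯` has an anomaly of the same shape, so adding the multiple
`π² (v,v) / 3` of `E₂ φ(τ,0)` gives a weakly holomorphic form of weight two for `SL₂(ℤ)`.

The constant term of such a form vanishes (`constantTerm_weight_two`): it is the period under
`τ ↦ τ + 1` of a primitive, and the relations `S² = (ST)³ = ±1` force all the periods to vanish.
Since `φ` has principal part `a q⁻¹`, this constant term is computed in `sum_sq_eq` as
`∑ c(0,l) (l,v)² = (v,v) / 12 * (∑ c(0,l) - 24 a)` for every rational vector `v`. Polarizing in `v`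
and summing over a pair of dual bases of `L ⊗ ℚ` replaces `(l,v)²` by `(l,l)` and `(v,v)` by the
rank, which is the claim.

Only the expansion into exponentials is used for analytic purposes: second derivatives in `z` are
limits of symmetric second difference quotients, taken term by term by dominated convergence.
-/

noncomputable section

open Matrix Complex

/-- The complex upper half-plane, as a subset of `ℂ`. -/
def UH : Set ℂ := {τ : ℂ | 0 < τ.im}

/-- An even positive-definite lattice of rank `n`, presented through its Gram matrix:
the underlying free `ℤ`-module is `Fin n → ℤ`, the bilinear form is
`(x, y) = x ⬝ᵥ (G *ᵥ y)`. -/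
structure EvenLattice (n : ℕ) where
  /-- the Gram matrix -/
  G : Matrix (Fin n) (Fin n) ℤ
  symm : G.IsSymm
  even_diag : ∀ i, 2 ∣ G i i
  posdef : ∀ x : Fin n → ℤ, x ≠ 0 → 0 < x ⬝ᵥ (G *ᵥ x)

namespace EvenLattice

variable {n : ℕ}

/-- The bilinear form, extended `ℚ`-bilinearly to `L ⊗ ℚ = Fin n → ℚ`. -/
def bq (L : EvenLattice n) (x y : Fin n → ℚ) : ℚ :=
  x ⬝ᵥ ((L.G.map (Int.cast : ℤ → ℚ)) *ᵥ y)

/-- The bilinear form, extended `ℂ`-bilinearly to `L ⊗ ℂ = Fin n → ℂ`. -/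
def bc (L : EvenLattice n) (x y : Fin n → ℂ) : ℂ :=
  x ⬝ᵥ ((L.G.map (Int.cast : ℤ → ℂ)) *ᵥ y)

/-- `x ∈ L ⊗ ℚ` is a lattice vector, i.e. has integral coordinates. -/
def IsIntVec (L : EvenLattice n) (x : Fin n → ℚ) : Prop := ∀ i, ∃ m : ℤ, x i = m

/-- `x` lies in the dual lattice `L^∨`. -/
def InDual (L : EvenLattice n) (x : Fin n → ℚ) : Prop :=
  ∀ l : Fin n → ℚ, L.IsIntVec l → ∃ m : ℤ, L.bq x l = m

/-- `L` is unimodular, i.e. `L^∨ = L`. -/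
def Unimodular (L : EvenLattice n) : Prop :=
  ∀ x : Fin n → ℚ, L.InDual x → L.IsIntVec x

/-- The number `|R(L)|` of `2`-roots of `L`, i.e. of vectors `r ∈ L` with `(r,r) = 2`. -/
def rootCount (L : EvenLattice n) : ℕ :=
  Nat.card {r : Fin n → ℚ // L.IsIntVec r ∧ L.bq r r = 2}

end EvenLattice

/-- A weakly holomorphic Jacobi form of weight `k` and index `L`, recorded together with the
system of its Fourier coefficients `coef`. -/
structure WeakJacobiForm {n : ℕ} (L : EvenLattice n) (k : ℤ) where
  /-- the underlying function on `ℍ × (L ⊗ ℂ)` -/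
  toFun : ℂ → (Fin n → ℂ) → ℂ
  /-- the Fourier coefficients `f(n, l)` -/
  coef : ℤ → (Fin n → ℚ) → ℂ
  holo : DifferentiableOn ℂ (fun p : ℂ × (Fin n → ℂ) => toFun p.1 p.2)
    (UH ×ˢ (Set.univ : Set (Fin n → ℂ)))
  modular : ∀ a b c d : ℤ, a * d - b * c = 1 → ∀ τ ∈ UH, ∀ z : Fin n → ℂ,
    toFun (((a : ℂ) * τ + b) / ((c : ℂ) * τ + d)) (fun i => z i / ((c : ℂ) * τ + d)) =
      ((c : ℂ) * τ + d) ^ k *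
        Complex.exp ((Real.pi : ℂ) * Complex.I * c * L.bc z z / ((c : ℂ) * τ + d)) * toFun τ z
  elliptic : ∀ x y : Fin n → ℚ, L.IsIntVec x → L.IsIntVec y → ∀ τ ∈ UH, ∀ z : Fin n → ℂ,
    toFun τ (fun i => z i + (x i : ℂ) * τ + (y i : ℂ)) =
      Complex.exp (-((Real.pi : ℂ) * Complex.I) *
        ((L.bq x x : ℂ) * τ + 2 * L.bc (fun i => (x i : ℂ)) z)) * toFun τ z
  coef_bdd : ∃ n₁ : ℤ, ∀ m : ℤ, ∀ l : Fin n → ℚ, m < n₁ → coef m l = 0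
  coef_dual : ∀ (m : ℤ) (l : Fin n → ℚ), coef m l ≠ 0 → L.InDual l
  coef_finite : ∀ m : ℤ, {l : Fin n → ℚ | coef m l ≠ 0}.Finite
  expansion : ∀ τ ∈ UH, ∀ z : Fin n → ℂ,
    HasSum (fun p : ℤ × (Fin n → ℚ) =>
      coef p.1 p.2 * Complex.exp (2 * (Real.pi : ℂ) * Complex.I *
        ((p.1 : ℂ) * τ + L.bc (fun i => (p.2 i : ℂ)) z))) (toFun τ z)

/-! ### Weight two: vanishing of the constant term -/

theorem isOpen_UH : IsOpen UH := isOpen_lt continuous_const Complex.continuous_im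

theorem UH_ne_zero {τ : ℂ} (h : τ ∈ UH) : τ ≠ 0 := by
  rintro rfl
  simp [UH] at h

theorem neg_one_div_mem_UH {τ : ℂ} (h : τ ∈ UH) : -1 / τ ∈ UH := by
  have h0 := UH_ne_zero h
  simp only [UH, Set.mem_ofPred_eq] at *
  have : (-1 / τ).im = τ.im / Complex.normSq τ := by
    rw [neg_div, one_div, Complex.neg_im, Complex.inv_im]; ring
  rw [this]
  exact div_pos h (Complex.normSq_pos.2 h0)

theorem norm_exp_two_pi (N : ℤ) (τ : ℂ) :
    ‖Complex.exp (2 * (Real.pi : ℂ) * Complex.I * (N * τ))‖ = Real.exp (-(2 * Real.pi * N * τ.im)) := by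
  rw [Complex.norm_exp]
  congr 1
  simp [Complex.mul_re, Complex.mul_im]
  ring

/-- The term of index `(N, c)` of a formal primitive of `∑ c q^N`. -/
def primTerm (N : ℤ) (c τ : ℂ) : ℂ :=
  if N = 0 then c * τ
  else c * Complex.exp (2 * (Real.pi : ℂ) * Complex.I * (N * τ)) / (2 * (Real.pi : ℂ) * Complex.I * N)

theorem hasDerivAt_primTerm (N : ℤ) (c τ : ℂ) :
    HasDerivAt (primTerm N c) (c * Complex.exp (2 * (Real.pi : ℂ) * Complex.I * (N * τ))) τ := by
  unfold primTerm
  by_cases h : N = 0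
  · simpa [h] using (hasDerivAt_id τ).const_mul c
  · simp only [h, if_false]
    have hN : (N : ℂ) ≠ 0 := by exact_mod_cast h
    have hp : (Real.pi : ℂ) ≠ 0 := by exact_mod_cast Real.pi_ne_zero
    have h1 : HasDerivAt (fun τ : ℂ => 2 * (Real.pi : ℂ) * Complex.I * (N * τ))
        (2 * (Real.pi : ℂ) * Complex.I * (N * 1)) τ :=
      ((hasDerivAt_id τ).const_mul (N : ℂ)).const_mul _
    have h2 := (h1.cexp.const_mul c).div_const (2 * (Real.pi : ℂ) * Complex.I * N)
    refine h2.congr_deriv ?_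
    field_simp

theorem norm_primTerm_le (N : ℤ) (c τ : ℂ) :
    ‖primTerm N c τ‖ ≤
      (1 + ‖τ‖) * ‖c * Complex.exp (2 * (Real.pi : ℂ) * Complex.I * (N * τ))‖ := by
  unfold primTerm
  by_cases h : N = 0
  · simp only [h, if_true, norm_mul]
    simp
    nlinarith [norm_nonneg c, norm_nonneg τ]
  · simp only [h, if_false]
    rw [norm_div]
    have h1 : (1 : ℝ) ≤ |(N : ℝ)| := by exact_mod_cast Int.one_le_abs h
    have h2 : (1 : ℝ) ≤ ‖2 * (Real.pi : ℂ) * Complex.I * N‖ := by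
      simp [abs_of_pos Real.pi_pos]
      nlinarith [Real.pi_gt_three]
    calc _ ≤ ‖c * Complex.exp (2 * (Real.pi : ℂ) * Complex.I * (N * τ))‖ / 1 := by gcongr
      _ ≤ _ := by
        rw [div_one]
        exact le_mul_of_one_le_left (norm_nonneg _) (by linarith [norm_nonneg τ])

theorem primTerm_add_one (N : ℤ) (c τ : ℂ) :
    primTerm N c (τ + 1) = primTerm N c τ + if N = 0 then c else 0 := by
  unfold primTerm
  by_cases h : N = 0
  · simp [h]; ring
  · simp only [h, if_false, add_zero]
    have : Complex.exp (2 * (Real.pi : ℂ) * Complex.I * (N * (τ + 1))) =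
        Complex.exp (2 * (Real.pi : ℂ) * Complex.I * (N * τ)) := by
      rw [Complex.exp_eq_exp_iff_exists_int]
      exact ⟨N, by ring⟩
    rw [this]

/-- A primitive of an absolutely convergent `q`-series, differentiated term by term. -/
theorem hasDerivAt_prim {ι : Type*} (N : ι → ℤ) (c : ι → ℂ)
    (hs : ∀ τ ∈ UH, Summable fun i =>
      c i * Complex.exp (2 * (Real.pi : ℂ) * Complex.I * (N i * τ))) {τ : ℂ} (hτ : τ ∈ UH) :
    HasDerivAt (fun τ => ∑' i, primTerm (N i) (c i) τ)
      (∑' i, c i * Complex.exp (2 * (Real.pi : ℂ) * Complex.I * (N i * τ))) τ := by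
  have hτ' : 0 < τ.im := hτ
  -- On a horizontal strip `|q^N|` is bounded by the sum of its values at the two heights,
  -- whatever the sign of `N`.
  let t : Set ℂ := {z | τ.im / 2 < z.im} ∩ {z | z.im < 2 * τ.im}
  have hlo : (((τ.im / 2 : ℝ) : ℂ) * Complex.I) ∈ UH := by simp [UH, hτ']
  have hhi : (((2 * τ.im : ℝ) : ℂ) * Complex.I) ∈ UH := by simp [UH, hτ']
  have hto : IsOpen t := (isOpen_lt continuous_const Complex.continuous_im).inter
    (isOpen_lt Complex.continuous_im continuous_const)
  have htc : Convex ℝ t := (convex_halfSpace_im_gt _).inter (convex_halfSpace_im_lt _)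
  have hmem : τ ∈ t := ⟨by show τ.im / 2 < τ.im; linarith, by show τ.im < 2 * τ.im; linarith⟩
  refine hasDerivAt_tsum_of_isPreconnected ((hs _ hlo).norm.add (hs _ hhi).norm) hto
    htc.isPreconnected (fun i y _ => hasDerivAt_primTerm (N i) (c i) y) ?_ hmem ?_ hmem
  · rintro i y ⟨hy1, hy2⟩
    simp only [Set.mem_ofPred_eq] at hy1 hy2
    simp only [norm_mul (c i), norm_exp_two_pi]
    rw [← mul_add]
    refine mul_le_mul_of_nonneg_left ?_ (norm_nonneg _)
    have e1 : (((τ.im / 2 : ℝ) : ℂ) * Complex.I).im = τ.im / 2 := by simp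
    have e2 : (((2 * τ.im : ℝ) : ℂ) * Complex.I).im = 2 * τ.im := by simp
    rw [e1, e2]
    have hpi := Real.pi_pos
    rcases le_total 0 (N i) with h | h
    · have h' : (0 : ℝ) ≤ N i := by exact_mod_cast h
      refine le_add_of_le_of_nonneg (Real.exp_le_exp.2 ?_) (Real.exp_pos _).le
      have : 0 ≤ 2 * Real.pi * (N i : ℝ) := by positivity
      nlinarith
    · have h' : (N i : ℝ) ≤ 0 := by exact_mod_cast h
      refine le_add_of_nonneg_of_le (Real.exp_pos _).le (Real.exp_le_exp.2 ?_)
      have : 0 ≤ 2 * Real.pi * (-(N i : ℝ)) := by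
        have : 0 ≤ -(N i : ℝ) := by linarith
        positivity
      nlinarith
  · exact Summable.of_norm_bounded ((hs τ hτ).norm.mul_left (1 + ‖τ‖))
      fun i => norm_primTerm_le _ _ _

/-- The constant term of a weakly holomorphic modular form of weight two for `SL₂(ℤ)` vanishes.
For a primitive `P` of the form, `P(-1/τ) - P(τ)` is constant, and it is zero because `S` fixes
`i`. At a primitive cube root of unity `ρ`, where `-1/ρ = ρ + 1`, this says `P(ρ+1) = P(ρ)`; but
`P(τ+1) - P(τ)` is always the constant term. No bound on the order of the pole is needed. -/
theorem constantTerm_weight_two {ι : Type*} (N : ι → ℤ) (c : ι → ℂ)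
    (hs : ∀ τ ∈ UH, Summable fun i =>
      c i * Complex.exp (2 * (Real.pi : ℂ) * Complex.I * (N i * τ)))
    (hF : ∀ τ ∈ UH, ∑' i, c i * Complex.exp (2 * (Real.pi : ℂ) * Complex.I * (N i * (-1 / τ))) =
      τ ^ 2 * ∑' i, c i * Complex.exp (2 * (Real.pi : ℂ) * Complex.I * (N i * τ))) :
    ∑' i, (if N i = 0 then c i else 0) = 0 := by
  let P : ℂ → ℂ := fun τ => ∑' i, primTerm (N i) (c i) τ
  have hsP : ∀ τ ∈ UH, Summable fun i => primTerm (N i) (c i) τ := fun τ hτ =>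
    Summable.of_norm_bounded ((hs τ hτ).norm.mul_left (1 + ‖τ‖)) fun i => norm_primTerm_le _ _ _
  have hD : ∀ τ ∈ UH, HasDerivAt (fun τ => P (-1 / τ) - P τ) 0 τ := by
    intro τ hτ
    have h0 := UH_ne_zero hτ
    have h1 : HasDerivAt (fun τ : ℂ => -1 / τ) (1 / τ ^ 2) τ := by
      have h := (hasDerivAt_inv h0).const_mul (-1)
      simp only [div_eq_mul_inv]
      exact h.congr_deriv (by ring)
    have h2 := ((hasDerivAt_prim N c hs (neg_one_div_mem_UH hτ)).comp τ h1).sub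
      (hasDerivAt_prim N c hs hτ)
    rw [hF τ hτ] at h2
    refine h2.congr_deriv ?_
    field_simp
    ring
  have hconst : ∀ x ∈ UH, ∀ y ∈ UH, P (-1 / x) - P x = P (-1 / y) - P y := by
    intro x hx y hy
    exact isOpen_UH.is_const_of_deriv_eq_zero (convex_halfSpace_im_gt 0).isPreconnected
      (fun z hz => (hD z hz).differentiableAt.differentiableWithinAt)
      (fun z hz => (hD z hz).deriv) hx hy
  have hi : Complex.I ∈ UH := by simp [UH]
  let ρ : ℂ := ⟨-1 / 2, √3 / 2⟩
  have hρ : ρ ∈ UH := by simp [UH, ρ]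
  have hρ1 : -1 / ρ = ρ + 1 := by
    rw [div_eq_iff (UH_ne_zero hρ)]
    have h3 : √3 * √3 = 3 := Real.mul_self_sqrt (by norm_num)
    apply Complex.ext
    · simp [ρ]; nlinarith
    · simp [ρ]; ring
  have key := hconst ρ hρ Complex.I hi
  have hI : -1 / Complex.I = Complex.I := by
    rw [div_eq_iff Complex.I_ne_zero, Complex.I_mul_I]
  rw [hI, sub_self, hρ1] at key
  have hsum := hsP _ (neg_one_div_mem_UH hρ)
  rw [hρ1] at hsum
  have : ∑' i, (if N i = 0 then c i else 0) = P (ρ + 1) - P ρ := by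
    rw [← hsum.tsum_sub (hsP _ hρ)]
    exact tsum_congr fun i => by rw [primTerm_add_one]; ring
  rw [this, key]

/-! ### The quasimodular Eisenstein series of weight two -/

open Classical in
/-- The `q`-expansion and the `S`-transformation of `E₂`, on `UH`. -/
theorem exists_E2 : ∃ (e : ℕ → ℂ) (E : ℂ → ℂ), e 0 = 1 ∧ e 1 = -24 ∧
    (∀ τ ∈ UH, HasSum (fun m : ℕ =>
      e m * Complex.exp (2 * (Real.pi : ℂ) * Complex.I * (m * τ))) (E τ)) ∧
    ∀ τ ∈ UH, E (-1 / τ) = τ ^ 2 * E τ + 6 * τ / (Real.pi * Complex.I) := by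
  refine ⟨fun m => if m = 0 then 1 else -24 * (ArithmeticFunction.sigma 1 m : ℂ),
    fun τ => if h : τ ∈ UH then EisensteinSeries.E2 ⟨τ, h⟩ else 0, by simp, by simp, ?_, ?_⟩
  · intro τ hτ
    simp only [hτ, dif_pos]
    have := EisensteinSeries.hasSum_qExpansion_E2 (z := ⟨τ, hτ⟩)
    convert this using 2 with m
    rw [smul_eq_mul]
    congr 1
    rw [← Complex.exp_nat_mul]
    congr 1
    change _ = _ * (_ * τ)
    ring
  · intro τ hτ
    simp only [hτ, neg_one_div_mem_UH hτ, dif_pos]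
    have h0 := UH_ne_zero hτ
    have h := EisensteinSeries.G2_S_transform ⟨τ, hτ⟩
    have hS : (ModularGroup.S • (⟨τ, hτ⟩ : UpperHalfPlane)) = ⟨-1 / τ, neg_one_div_mem_UH hτ⟩ := by
      rw [UpperHalfPlane.modular_S_smul]
      apply UpperHalfPlane.ext
      change (-τ)⁻¹ = -1 / τ
      rw [neg_div, one_div, inv_neg]
    rw [hS] at h
    change EisensteinSeries.G2 ⟨τ, hτ⟩ = (τ ^ 2)⁻¹ * _ - -2 * Real.pi * Complex.I / τ at h
    have hp : (Real.pi : ℂ) ≠ 0 := by exact_mod_cast Real.pi_ne_zero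
    simp only [EisensteinSeries.E2, Pi.smul_apply, smul_eq_mul]
    rw [h, riemannZeta_two]
    field_simp
    ring_nf
    simp only [Complex.I_sq]
    ring

/-! ### Second-order Taylor coefficients of exponential sums -/

theorem norm_exp_le (x : ℂ) : ‖Complex.exp x‖ ≤ Real.exp ‖x‖ := by
  rw [Complex.norm_exp]
  exact Real.exp_le_exp.2 (Complex.re_le_norm x)

theorem sq_le_two_mul_exp {x : ℝ} (hx : 0 ≤ x) : x ^ 2 ≤ 2 * Real.exp x := by
  have := Real.quadratic_le_exp_of_nonneg hx
  nlinarith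

/-- The symmetric second difference quotient of `exp (t * w)` at `t = 0` is bounded uniformly in
`0 < |t| ≤ 1`; this is the majorant for dominated convergence. -/
theorem norm_secondDiff_le (w t : ℂ) (ht0 : t ≠ 0) (ht : ‖t‖ ≤ 1) :
    ‖(Complex.exp (t * w) + Complex.exp (-t * w) - 2) / t ^ 2‖ ≤ 4 * Real.exp (2 * ‖w‖) := by
  have h1 := Complex.norm_exp_sub_sum_le_norm_mul_exp (t * w) 2
  have h2 := Complex.norm_exp_sub_sum_le_norm_mul_exp (-t * w) 2
  simp only [Finset.sum_range_succ, Finset.sum_range_zero] at h1 h2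
  simp at h1 h2
  have htw : ‖t‖ * ‖w‖ ≤ ‖w‖ := mul_le_of_le_one_left (norm_nonneg _) ht
  have htp : 0 < ‖t‖ := norm_pos_iff.2 ht0
  rw [norm_div, norm_pow, div_le_iff₀ (by positivity)]
  have hsplit : Complex.exp (t * w) + Complex.exp (-t * w) - 2 =
      (Complex.exp (t * w) - (1 + t * w)) + (Complex.exp (-(t * w)) - (1 + -(t * w))) := by
    rw [neg_mul]; ring
  rw [hsplit]
  refine (norm_add_le _ _).trans ((add_le_add h1 h2).trans ?_)
  have he : Real.exp (‖t‖ * ‖w‖) ≤ Real.exp ‖w‖ := Real.exp_le_exp.2 htw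
  have hq := sq_le_two_mul_exp (norm_nonneg w)
  have h2e : Real.exp (2 * ‖w‖) = Real.exp ‖w‖ * Real.exp ‖w‖ := by
    rw [← Real.exp_add]; ring_nf
  calc (‖t‖ * ‖w‖) ^ 2 * Real.exp (‖t‖ * ‖w‖) + (‖t‖ * ‖w‖) ^ 2 * Real.exp (‖t‖ * ‖w‖)
      = 2 * ‖t‖ ^ 2 * (‖w‖ ^ 2 * Real.exp (‖t‖ * ‖w‖)) := by ring
    _ ≤ 2 * ‖t‖ ^ 2 * (2 * Real.exp ‖w‖ * Real.exp ‖w‖) := by gcongr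
    _ = 4 * Real.exp (2 * ‖w‖) * ‖t‖ ^ 2 := by rw [h2e]; ring

theorem tendsto_secondDiff_exp (w : ℂ) :
    Filter.Tendsto (fun t : ℂ => (Complex.exp (t * w) + Complex.exp (-t * w) - 2) / t ^ 2)
      (nhdsWithin 0 {0}ᶜ) (nhds (w ^ 2)) := by
  rw [tendsto_iff_norm_sub_tendsto_zero]
  have hb : Filter.Tendsto (fun t : ℂ => 2 * (‖t‖ * ‖w‖ ^ 3 * Real.exp (‖t‖ * ‖w‖)))
      (nhdsWithin 0 {0}ᶜ) (nhds 0) := by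
    have : Continuous fun t : ℂ => 2 * (‖t‖ * ‖w‖ ^ 3 * Real.exp (‖t‖ * ‖w‖)) := by fun_prop
    have h := this.tendsto 0
    simp only [norm_zero, zero_mul, mul_zero] at h
    exact h.mono_left nhdsWithin_le_nhds
  refine squeeze_zero' (Filter.Eventually.of_forall fun _ => norm_nonneg _) ?_ hb
  filter_upwards [self_mem_nhdsWithin] with t ht
  have ht0 : t ≠ 0 := ht
  have htp : 0 < ‖t‖ := norm_pos_iff.2 ht0
  have h1 := Complex.norm_exp_sub_sum_le_norm_mul_exp (t * w) 3
  have h2 := Complex.norm_exp_sub_sum_le_norm_mul_exp (-t * w) 3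
  simp only [Finset.sum_range_succ, Finset.sum_range_zero] at h1 h2
  simp at h1 h2
  have hsplit : (Complex.exp (t * w) + Complex.exp (-t * w) - 2) / t ^ 2 - w ^ 2 =
      ((Complex.exp (t * w) - (1 + t * w + (t * w) ^ 2 / 2)) +
        (Complex.exp (-(t * w)) - (1 + -(t * w) + (t * w) ^ 2 / 2))) / t ^ 2 := by
    rw [neg_mul]; field_simp; ring
  rw [hsplit, norm_div, norm_pow, div_le_iff₀ (by positivity)]
  refine (norm_add_le _ _).trans ((add_le_add h1 h2).trans (le_of_eq ?_))
  ring

/-- For purely imaginary frequencies `2πi r`, values of the exponential sum at `t = ±2i` dominate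
the second difference quotients. -/
theorem exp_two_norm_le (r : ℝ) :
    Real.exp (2 * ‖2 * (Real.pi : ℂ) * Complex.I * r‖) ≤
      ‖Complex.exp (2 * Complex.I * (2 * (Real.pi : ℂ) * Complex.I * r))‖ +
      ‖Complex.exp (-2 * Complex.I * (2 * (Real.pi : ℂ) * Complex.I * r))‖ := by
  have e1 : 2 * Complex.I * (2 * (Real.pi : ℂ) * Complex.I * r) = ((-(4 * Real.pi * r) : ℝ) : ℂ) := by
    push_cast; linear_combination (4 * (Real.pi : ℂ) * r) * Complex.I_sq
  have e2 : -2 * Complex.I * (2 * (Real.pi : ℂ) * Complex.I * r) = ((4 * Real.pi * r : ℝ) : ℂ) := by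
    push_cast; linear_combination (-4 * (Real.pi : ℂ) * r) * Complex.I_sq
  have e3 : ‖2 * (Real.pi : ℂ) * Complex.I * r‖ = 2 * Real.pi * |r| := by
    simp [abs_of_pos Real.pi_pos]
  rw [e1, e2, e3, Complex.norm_exp_ofReal, Complex.norm_exp_ofReal]
  rcases abs_cases r with ⟨h, _⟩ | ⟨h, _⟩ <;> rw [h]
  · refine le_add_of_nonneg_of_le (Real.exp_pos _).le (Real.exp_le_exp.2 (le_of_eq (by ring)))
  · refine le_add_of_le_of_nonneg (Real.exp_le_exp.2 (le_of_eq (by ring))) (Real.exp_pos _).le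

/-- Termwise second derivative at `0` of an everywhere absolutely convergent sum
`g t = ∑ C exp (2πi r t)`, as a symmetric second difference quotient. -/
theorem tendsto_secondDiff_tsum {ι : Type*} (C : ι → ℂ) (r : ι → ℝ) (g : ℂ → ℂ)
    (hg : ∀ t, HasSum (fun i => C i * Complex.exp (t * (2 * (Real.pi : ℂ) * Complex.I * r i))) (g t)) :
    Summable (fun i => C i * (2 * (Real.pi : ℂ) * Complex.I * r i) ^ 2) ∧
    Filter.Tendsto (fun t : ℂ => (g t + g (-t) - 2 * g 0) / t ^ 2) (nhdsWithin 0 {0}ᶜ)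
      (nhds (∑' i, C i * (2 * (Real.pi : ℂ) * Complex.I * r i) ^ 2)) := by
  set w : ι → ℂ := fun i => 2 * (Real.pi : ℂ) * Complex.I * r i with hw
  have hb : Summable fun i => 4 * (‖C i * Complex.exp (2 * Complex.I * w i)‖ +
      ‖C i * Complex.exp (-2 * Complex.I * w i)‖) :=
    ((hg _).summable.norm.add (hg _).summable.norm).mul_left 4
  have hdom : ∀ i, ‖C i‖ * (4 * Real.exp (2 * ‖w i‖)) ≤
      4 * (‖C i * Complex.exp (2 * Complex.I * w i)‖ +
      ‖C i * Complex.exp (-2 * Complex.I * w i)‖) := by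
    intro i
    have h := mul_le_mul_of_nonneg_left (exp_two_norm_le (r i)) (norm_nonneg (C i))
    rw [norm_mul (C i), norm_mul (C i)]
    simp only [hw]
    linarith
  constructor
  · refine Summable.of_norm_bounded hb fun i => le_trans ?_ (hdom i)
    rw [norm_mul, norm_pow]
    refine mul_le_mul_of_nonneg_left ?_ (norm_nonneg _)
    have h1 := sq_le_two_mul_exp (norm_nonneg (w i))
    have h2 : Real.exp ‖w i‖ ≤ Real.exp (2 * ‖w i‖) :=
      Real.exp_le_exp.2 (by linarith [norm_nonneg (w i)])
    linarith [Real.exp_pos (2 * ‖w i‖)]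
  · have hlim := tendsto_tsum_of_dominated_convergence (𝓕 := nhdsWithin (0 : ℂ) {0}ᶜ)
      (f := fun t i => C i * ((Complex.exp (t * w i) + Complex.exp (-t * w i) - 2) / t ^ 2))
      (g := fun i => C i * w i ^ 2) hb
      (fun i => (tendsto_secondDiff_exp (w i)).const_mul (C i)) ?_
    · refine hlim.congr fun t => ?_
      have h0 := hg 0
      simp only [zero_mul, Complex.exp_zero, mul_one] at h0
      have h := (((hg t).add (hg (-t))).sub (h0.mul_left 2)).div_const (t ^ 2)
      rw [← h.tsum_eq]
      exact tsum_congr fun i => by ring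
    · have hball : Metric.closedBall (0 : ℂ) 1 ∈ nhdsWithin (0 : ℂ) {0}ᶜ :=
        nhdsWithin_le_nhds (Metric.closedBall_mem_nhds _ one_pos)
      filter_upwards [self_mem_nhdsWithin, hball] with t ht ht1 i
      rw [norm_mul]
      exact (mul_le_mul_of_nonneg_left (norm_secondDiff_le (w i) t ht (by simpa using ht1))
        (norm_nonneg _)).trans (hdom i)

/-- Multiplying by a Gaussian `exp (κ t²)` adds `2 κ g(0)` to the second derivative at `0`. -/
theorem tendsto_secondDiff_gauss (g : ℂ → ℂ) (κ H : ℂ)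
    (hg : Filter.Tendsto (fun t : ℂ => (g t + g (-t) - 2 * g 0) / t ^ 2) (nhdsWithin 0 {0}ᶜ)
      (nhds H)) :
    Filter.Tendsto (fun t : ℂ => (Complex.exp (κ * t ^ 2) * g t + Complex.exp (κ * t ^ 2) * g (-t)
      - 2 * g 0) / t ^ 2) (nhdsWithin 0 {0}ᶜ) (nhds (H + 2 * κ * g 0)) := by
  have h1 : Filter.Tendsto (fun t : ℂ => Complex.exp (κ * t ^ 2)) (nhdsWithin 0 {0}ᶜ) (nhds 1) := by
    have : Continuous fun t : ℂ => Complex.exp (κ * t ^ 2) := by fun_prop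
    have h := this.tendsto 0
    simp only [ne_eq, OfNat.ofNat_ne_zero, not_false_eq_true, zero_pow, mul_zero,
      Complex.exp_zero] at h
    exact h.mono_left nhdsWithin_le_nhds
  have h2 : Filter.Tendsto (fun t : ℂ => (Complex.exp (κ * t ^ 2) - 1) / t ^ 2) (nhdsWithin 0 {0}ᶜ)
      (nhds κ) := by
    have hd : HasDerivAt (fun s : ℂ => Complex.exp (κ * s)) κ 0 := by
      have := ((hasDerivAt_id (0 : ℂ)).const_mul κ).cexp
      simpa using this
    have hs := hasDerivAt_iff_tendsto_slope_zero.1 hd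
    have hsq : Filter.Tendsto (fun t : ℂ => t ^ 2) (nhdsWithin 0 {0}ᶜ) (nhdsWithin 0 {0}ᶜ) := by
      refine tendsto_nhdsWithin_iff.2 ⟨?_, ?_⟩
      · have h := (continuous_pow (M := ℂ) 2).tendsto 0
        simp only [ne_eq, OfNat.ofNat_ne_zero, not_false_eq_true, zero_pow] at h
        exact h.mono_left nhdsWithin_le_nhds
      · filter_upwards [self_mem_nhdsWithin] with t ht
        exact pow_ne_zero 2 ht
    refine (hs.comp hsq).congr fun t => ?_
    simp [div_eq_inv_mul]
  have h3 := (h1.mul hg).add (h2.mul_const (2 * g 0))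
  rw [show 1 * H + κ * (2 * g 0) = H + 2 * κ * g 0 by ring] at h3
  refine h3.congr fun t => ?_
  ring

/-! ### The Taylor coefficients of a Jacobi form -/

theorem bc_cast {n : ℕ} (L : EvenLattice n) (x y : Fin n → ℚ) :
    L.bc (fun i => (x i : ℂ)) (fun i => (y i : ℂ)) = (L.bq x y : ℂ) := by
  simp [EvenLattice.bc, EvenLattice.bq, dotProduct, Matrix.mulVec]

theorem bc_smul_right {n : ℕ} (L : EvenLattice n) (x y : Fin n → ℂ) (t : ℂ) :
    L.bc x (t • y) = t * L.bc x y := by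
  simp [EvenLattice.bc, Matrix.mulVec_smul]

theorem bc_smul_left {n : ℕ} (L : EvenLattice n) (x y : Fin n → ℂ) (t : ℂ) :
    L.bc (t • x) y = t * L.bc x y := by
  simp [EvenLattice.bc]

/-- The restriction of a Jacobi form to the complex line through the rational vector `v`. -/
def onLine {n : ℕ} {L : EvenLattice n} {k : ℤ} (φ : WeakJacobiForm L k) (v : Fin n → ℚ)
    (τ t : ℂ) : ℂ :=
  φ.toFun τ (t • fun i => (v i : ℂ))

/-- The factor `f(n,l) qⁿ`, independent of `z`, of the Fourier term with index `p = (n,l)`. -/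
def qTerm {n : ℕ} {L : EvenLattice n} {k : ℤ} (φ : WeakJacobiForm L k) (τ : ℂ)
    (p : ℤ × (Fin n → ℚ)) : ℂ :=
  φ.coef p.1 p.2 * Complex.exp (2 * (Real.pi : ℂ) * Complex.I * (p.1 * τ))

/-- The frequency `2πi (l,v)` of the term `ζ^l` along the line through `v`. -/
def freq {n : ℕ} (L : EvenLattice n) (v l : Fin n → ℚ) : ℂ :=
  2 * (Real.pi : ℂ) * Complex.I * ((L.bq l v : ℝ) : ℂ)

theorem hasSum_onLine {n : ℕ} {L : EvenLattice n} {k : ℤ} (φ : WeakJacobiForm L k)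
    (v : Fin n → ℚ) {τ : ℂ} (hτ : τ ∈ UH) (t : ℂ) :
    HasSum (fun p : ℤ × (Fin n → ℚ) => qTerm φ τ p * Complex.exp (t * freq L v p.2))
      (onLine φ v τ t) := by
  convert φ.expansion τ hτ (t • fun i => (v i : ℂ)) using 1
  · funext p
    rw [bc_smul_right, bc_cast, qTerm, freq, mul_assoc, ← Complex.exp_add]
    congr 2
    push_cast
    ring
  · rfl

/-- The transformation under `S : τ ↦ -1/τ`, restricted to the line through `v`. -/
theorem onLine_S {n : ℕ} {L : EvenLattice n} (φ : WeakJacobiForm L 0)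
    (v : Fin n → ℚ) {τ : ℂ} (hτ : τ ∈ UH) (t : ℂ) :
    onLine φ v (-1 / τ) (t / τ) =
      Complex.exp ((Real.pi * Complex.I * (L.bq v v : ℂ) / τ) * t ^ 2) * onLine φ v τ t := by
  have h := φ.modular 0 (-1) 1 0 (by norm_num) τ hτ (t • fun i => (v i : ℂ))
  rw [bc_smul_left, bc_smul_right, bc_cast] at h
  simp only [Int.cast_zero, zero_mul, Int.cast_neg, Int.cast_one, one_mul, zero_add, add_zero,
    zpow_zero, mul_one] at h
  unfold onLine
  convert h using 2
  · ext i; simp; ring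
  · congr 1; ring

/-- The second derivative at `z = 0` along `v` is quasimodular of weight two: this is the
second-order part of `onLine_S`, whose Gaussian factor produces the anomaly. -/
theorem secondCoeff_S {n : ℕ} {L : EvenLattice n} (φ : WeakJacobiForm L 0)
    (v : Fin n → ℚ) {τ : ℂ} (hτ : τ ∈ UH) :
    ∑' p : ℤ × (Fin n → ℚ), qTerm φ (-1 / τ) p * freq L v p.2 ^ 2 =
      τ ^ 2 * (∑' p : ℤ × (Fin n → ℚ), qTerm φ τ p * freq L v p.2 ^ 2) +
        2 * (Real.pi * Complex.I) * (L.bq v v : ℂ) * τ * onLine φ v τ 0 := by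
  have h0 := UH_ne_zero hτ
  have h1 := (tendsto_secondDiff_tsum (qTerm φ τ) (fun p => ((L.bq p.2 v : ℚ) : ℝ)) _
    (hasSum_onLine φ v hτ)).2
  have h2 := (tendsto_secondDiff_tsum (qTerm φ (-1 / τ)) (fun p => ((L.bq p.2 v : ℚ) : ℝ)) _
    (hasSum_onLine φ v (neg_one_div_mem_UH hτ))).2
  have h3 := tendsto_secondDiff_gauss _ (Real.pi * Complex.I * (L.bq v v : ℂ) / τ) _ h1
  -- rescale the variable on the line by `1 / τ`
  have hsc : Filter.Tendsto (fun t : ℂ => t / τ) (nhdsWithin 0 {0}ᶜ) (nhdsWithin 0 {0}ᶜ) := by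
    refine tendsto_nhdsWithin_iff.2 ⟨?_, ?_⟩
    · have : Continuous fun t : ℂ => t / τ := by fun_prop
      have h := this.tendsto 0
      simp only [zero_div] at h
      exact h.mono_left nhdsWithin_le_nhds
    · filter_upwards [self_mem_nhdsWithin] with t ht
      exact div_ne_zero ht h0
  have h4 := (h2.comp hsc).div_const (τ ^ 2)
  have h00 : onLine φ v (-1 / τ) 0 = onLine φ v τ 0 := by
    have := onLine_S φ v hτ 0
    simpa using this
  have h5 := tendsto_nhds_unique_of_eventuallyEq h4 h3 (by
    refine Filter.Eventually.of_forall fun t => ?_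
    have e1 := onLine_S φ v hτ t
    have e2 := onLine_S φ v hτ (-t)
    rw [neg_sq, neg_div τ t] at e2
    simp only [Function.comp_apply]
    rw [e1, e2, h00, div_pow, div_div, div_mul_cancel₀ _ (pow_ne_zero 2 h0)])
  unfold freq
  rw [div_eq_iff (pow_ne_zero 2 h0)] at h5
  rw [h5, add_mul]
  congr 1
  · exact mul_comm _ _
  · field_simp

/-- The combination of the second Taylor coefficient along `v` with `E₂ φ(τ,0)` that is modular
of weight two, written as a `q`-series indexed by pairs (term of `φ`, term of `E₂`). -/
def modCoef {n : ℕ} {L : EvenLattice n} {k : ℤ} (φ : WeakJacobiForm L k) (e : ℕ → ℂ)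
    (v : Fin n → ℚ) (x : (ℤ × (Fin n → ℚ)) × ℕ) : ℂ :=
  φ.coef x.1.1 x.1.2 *
    ((if x.2 = 0 then freq L v x.1.2 ^ 2 else 0) + Real.pi ^ 2 * (L.bq v v : ℂ) / 3 * e x.2)

theorem hasSum_mul_prod {ι κ : Type*} {f : ι → ℂ} {g : κ → ℂ} {a b : ℂ} (hf : HasSum f a)
    (hg : HasSum g b) : HasSum (fun x : ι × κ => f x.1 * g x.2) (a * b) :=
  hf.mul hg (summable_mul_of_summable_norm hf.summable.norm hg.summable.norm)

/-- The series with coefficients `modCoef` is absolutely convergent, and its sum is the second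
derivative along `v` plus `π² (v,v) / 3` times `E₂ φ(τ,0)`. -/
theorem hasSum_modCoef {n : ℕ} {L : EvenLattice n} (φ : WeakJacobiForm L 0) (e : ℕ → ℂ)
    (v : Fin n → ℚ) {τ E : ℂ} (hτ : τ ∈ UH)
    (hE : HasSum (fun m : ℕ =>
      e m * Complex.exp (2 * (Real.pi : ℂ) * Complex.I * (m * τ))) E) :
    HasSum (fun x : (ℤ × (Fin n → ℚ)) × ℕ => modCoef φ e v x *
        Complex.exp (2 * (Real.pi : ℂ) * Complex.I * (((x.1.1 + x.2 : ℤ) : ℂ) * τ)))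
      ((∑' p : ℤ × (Fin n → ℚ), qTerm φ τ p * freq L v p.2 ^ 2) +
        Real.pi ^ 2 * (L.bq v v : ℂ) / 3 * (onLine φ v τ 0 * E)) := by
  have h1 := (tendsto_secondDiff_tsum (qTerm φ τ) (fun p => ((L.bq p.2 v : ℚ) : ℝ)) _
    (hasSum_onLine φ v hτ)).1.hasSum
  have h2 := hasSum_onLine φ v hτ 0
  simp only [zero_mul, Complex.exp_zero, mul_one] at h2
  have h3 := hasSum_mul_prod h2 hE
  have hinj : Function.Injective (fun p : ℤ × (Fin n → ℚ) => (p, (0 : ℕ))) :=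
    fun a b h => (Prod.ext_iff.1 h).1
  have h4 : HasSum (fun x : (ℤ × (Fin n → ℚ)) × ℕ =>
      if x.2 = 0 then qTerm φ τ x.1 * freq L v x.1.2 ^ 2 else 0)
      (∑' p : ℤ × (Fin n → ℚ), qTerm φ τ p * freq L v p.2 ^ 2) := by
    refine (hinj.hasSum_iff ?_).1 ?_
    · rintro ⟨p, m⟩ hx
      refine if_neg ?_
      rintro rfl
      exact hx ⟨p, rfl⟩
    · simp only [Function.comp_def, if_true]
      exact h1
  convert h4.add (h3.mul_left (Real.pi ^ 2 * (L.bq v v : ℂ) / 3)) using 1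
  funext ⟨p, m⟩
  have hexp : Complex.exp (2 * (Real.pi : ℂ) * Complex.I * (((p.1 + m : ℤ) : ℂ) * τ)) =
      Complex.exp (2 * (Real.pi : ℂ) * Complex.I * (p.1 * τ)) *
      Complex.exp (2 * (Real.pi : ℂ) * Complex.I * (m * τ)) := by
    rw [← Complex.exp_add]
    congr 1
    push_cast
    ring
  simp only [modCoef, qTerm, hexp]
  by_cases hm : m = 0
  · subst hm
    simp
    ring
  · simp [hm]
    ring

/-- The refinement of the `q⁰`-identity for a single vector `v`: vanishing of the constant term of
the weight-two form attached to `v`, when the principal part of the Jacobi form is `a q⁻¹`. -/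
theorem sum_sq_eq {n : ℕ} (L : EvenLattice n) (φ : WeakJacobiForm L 0)
    (hlow : ∀ (m : ℤ) (l : Fin n → ℚ), m < -1 → φ.coef m l = 0)
    (hminus : ∀ l : Fin n → ℚ, l ≠ 0 → φ.coef (-1) l = 0) (v : Fin n → ℚ) :
    ∑ l ∈ (φ.coef_finite 0).toFinset, φ.coef 0 l * (L.bq l v : ℂ) ^ 2 =
      (L.bq v v : ℂ) * ((∑ l ∈ (φ.coef_finite 0).toFinset, φ.coef 0 l -
        24 * φ.coef (-1) 0) / 12) := by
  classical
  obtain ⟨e, E, e0, e1, hE, hES⟩ := exists_E2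
  have hp : (Real.pi : ℂ) ≠ 0 := by exact_mod_cast Real.pi_ne_zero
  have key := constantTerm_weight_two (fun x : (ℤ × (Fin n → ℚ)) × ℕ => (x.1.1 + x.2 : ℤ))
    (modCoef φ e v) (fun τ hτ => (hasSum_modCoef φ e v hτ (hE τ hτ)).summable) (by
      intro τ hτ
      have h0 := UH_ne_zero hτ
      have h00 : onLine φ v (-1 / τ) 0 = onLine φ v τ 0 := by
        simpa using onLine_S φ v hτ 0
      have hτ' := neg_one_div_mem_UH hτ
      rw [(hasSum_modCoef φ e v hτ (hE τ hτ)).tsum_eq,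
        (hasSum_modCoef φ e v hτ' (hE _ hτ')).tsum_eq, secondCoeff_S φ v hτ, hES τ hτ, h00]
      field_simp
      linear_combination (6 * Real.pi * (L.bq v v : ℂ) * onLine φ v τ 0) * Complex.I_sq)
  -- only the terms `f(0,l) e(0)` and `f(-1,0) e(1)` have exponent zero
  set S := (φ.coef_finite 0).toFinset with hS
  have hmem : ∀ l, l ∉ S → φ.coef 0 l = 0 := by
    intro l hl
    by_contra h
    exact hl ((φ.coef_finite 0).mem_toFinset.2 h)
  let T : Finset ((ℤ × (Fin n → ℚ)) × ℕ) :=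
    insert ((-1, 0), 1) (S.image fun l => ((0, l), 0))
  rw [tsum_eq_sum (s := T)] at key
  · rw [Finset.sum_insert (by simp), Finset.sum_image (by
      intro a _ b _ h
      simpa using h)] at key
    simp [modCoef, e0, e1, freq] at key
    have hsum : ∑ l ∈ S, φ.coef 0 l * ((2 * (Real.pi : ℂ) * Complex.I * (L.bq l v : ℂ)) ^ 2 +
        (Real.pi : ℂ) ^ 2 * (L.bq v v : ℂ) / 3) =
        -4 * (Real.pi : ℂ) ^ 2 * (∑ l ∈ S, φ.coef 0 l * (L.bq l v : ℂ) ^ 2) +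
        (Real.pi : ℂ) ^ 2 * (L.bq v v : ℂ) / 3 * ∑ l ∈ S, φ.coef 0 l := by
      rw [Finset.mul_sum, Finset.mul_sum, ← Finset.sum_add_distrib]
      refine Finset.sum_congr rfl fun l _ => ?_
      linear_combination (4 * (Real.pi : ℂ) ^ 2 * (L.bq l v : ℂ) ^ 2 * φ.coef 0 l) * Complex.I_sq
    rw [hsum] at key
    have hp2 : (Real.pi : ℂ) ^ 2 ≠ 0 := pow_ne_zero 2 hp
    refine mul_left_cancel₀ (mul_ne_zero (show (4 : ℂ) ≠ 0 by norm_num) hp2) ?_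
    linear_combination -key
  · rintro ⟨⟨m, l⟩, k⟩ hx
    split_ifs with h
    · have h' : m + (k : ℤ) = 0 := h
      have hcoef : φ.coef m l = 0 := by
        rcases lt_trichotomy m (-1) with hm | hm | hm
        · exact hlow m l hm
        · subst hm
          have hk : k = 1 := by omega
          subst hk
          refine hminus l ?_
          rintro rfl
          exact hx (by simp [T])
        · have hm0 : m = 0 := by omega
          have hk : k = 0 := by omega
          subst hm0 hk
          refine hmem l fun hl => hx ?_
          simp only [T, Finset.mem_insert, Finset.mem_image]
          exact Or.inr ⟨l, hl, rfl⟩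
      simp [modCoef, hcoef]
    · rfl

/-! ### Polarization and trace over the lattice -/

theorem bq_comm {n : ℕ} (L : EvenLattice n) (x y : Fin n → ℚ) : L.bq x y = L.bq y x := by
  have hs : (L.G.map (Int.cast : ℤ → ℚ))ᵀ = L.G.map (Int.cast : ℤ → ℚ) := by
    rw [← Matrix.transpose_map, L.symm.eq]
  unfold EvenLattice.bq
  rw [dotProduct_comm, ← Matrix.vecMul_transpose, hs, ← Matrix.dotProduct_mulVec]

theorem bq_add_right {n : ℕ} (L : EvenLattice n) (x y z : Fin n → ℚ) :
    L.bq x (y + z) = L.bq x y + L.bq x z := by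
  simp [EvenLattice.bq, Matrix.mulVec_add]

theorem bq_add_left {n : ℕ} (L : EvenLattice n) (x y z : Fin n → ℚ) :
    L.bq (x + y) z = L.bq x z + L.bq y z := by
  simp [EvenLattice.bq]

theorem isUnit_gram {n : ℕ} (L : EvenLattice n) :
    IsUnit (L.G.map (Int.cast : ℤ → ℚ)).det := by
  have h : L.G.det ≠ 0 := by
    intro h
    obtain ⟨x, hx, hx0⟩ := Matrix.exists_mulVec_eq_zero_iff.2 h
    have := L.posdef x hx
    simp [hx0] at this
  have h2 : (L.G.map (Int.cast : ℤ → ℚ)).det = ((L.G.det : ℤ) : ℚ) :=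
    (RingHom.map_det (Int.castRingHom ℚ) L.G).symm
  rw [h2]
  exact isUnit_iff_ne_zero.2 (by exact_mod_cast h)

/-- The `j`-th vector of the basis of `L ⊗ ℚ` dual, for the form, to the standard basis of `L`. -/
def dualVec {n : ℕ} (L : EvenLattice n) (j : Fin n) : Fin n → ℚ :=
  (L.G.map (Int.cast : ℤ → ℚ))⁻¹ *ᵥ Pi.single j 1

theorem bq_dualVec {n : ℕ} (L : EvenLattice n) (x : Fin n → ℚ) (j : Fin n) :
    L.bq x (dualVec L j) = x j := by
  unfold EvenLattice.bq dualVec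
  rw [Matrix.mulVec_mulVec, Matrix.mul_nonsing_inv _ (isUnit_gram L), Matrix.one_mulVec,
    dotProduct_single_one]

/-- The norm as a sum over a pair of dual bases. -/
theorem bq_self_eq_sum {n : ℕ} (L : EvenLattice n) (x : Fin n → ℚ) :
    L.bq x x = ∑ j, L.bq x (dualVec L j) * L.bq x (Pi.single j 1) := by
  simp only [bq_dualVec]
  simp_rw [bq_comm L x (Pi.single _ 1)]
  simp only [EvenLattice.bq, single_one_dotProduct]
  rfl

/-! ### The `q⁰`-identity -/

/-- the `q⁰`-identity for weakly holomorphic Jacobi forms of weight `0`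
whose only singular term is `a·q⁻¹`:
`Σ_{l∈L^∨} c(0,l) − (12/n₀) Σ_{l∈L^∨} c(0,l)·(l,l) − 24a = 0`. -/
theorem q0_identity {n₀ : ℕ} (hn : 1 ≤ n₀) (L : EvenLattice n₀)
    (φ : WeakJacobiForm L 0)
    (hlow : ∀ (m : ℤ) (l : Fin n₀ → ℚ), m < -1 → φ.coef m l = 0)
    (hminus : ∀ l : Fin n₀ → ℚ, l ≠ 0 → φ.coef (-1) l = 0) :
    (∑ᶠ l : Fin n₀ → ℚ, φ.coef 0 l) -
      (12 / (n₀ : ℂ)) * (∑ᶠ l : Fin n₀ → ℚ, φ.coef 0 l * (L.bq l l : ℂ)) -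
      24 * φ.coef (-1) 0 = 0 := by
  have hn0 : (n₀ : ℂ) ≠ 0 := by exact_mod_cast (by omega : n₀ ≠ 0)
  have hsupp1 : (Function.support fun l => φ.coef 0 l) ⊆ ↑(φ.coef_finite 0).toFinset := by
    intro l hl
    simpa using hl
  have hsupp2 : (Function.support fun l => φ.coef 0 l * (L.bq l l : ℂ)) ⊆
      ↑(φ.coef_finite 0).toFinset := by
    intro l hl
    exact hsupp1 (left_ne_zero_of_mul hl)
  rw [finsum_eq_sum_of_support_subset _ hsupp1, finsum_eq_sum_of_support_subset _ hsupp2]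
  have hQ := sum_sq_eq L φ hlow hminus
  set S := (φ.coef_finite 0).toFinset
  set K : ℂ := (∑ l ∈ S, φ.coef 0 l - 24 * φ.coef (-1) 0) / 12 with hK
  have hpol : ∀ u v : Fin n₀ → ℚ,
      ∑ l ∈ S, φ.coef 0 l * ((L.bq l u : ℂ) * (L.bq l v : ℂ)) = (L.bq u v : ℂ) * K := by
    intro u v
    have h := hQ (u + v)
    simp only [bq_add_right, bq_add_left, bq_comm L v u, Rat.cast_add] at h
    have hexp : ∑ l ∈ S, φ.coef 0 l * ((L.bq l u : ℂ) + (L.bq l v : ℂ)) ^ 2 =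
        ∑ l ∈ S, φ.coef 0 l * (L.bq l u : ℂ) ^ 2 + ∑ l ∈ S, φ.coef 0 l * (L.bq l v : ℂ) ^ 2 +
        2 * ∑ l ∈ S, φ.coef 0 l * ((L.bq l u : ℂ) * (L.bq l v : ℂ)) := by
      rw [Finset.mul_sum, ← Finset.sum_add_distrib, ← Finset.sum_add_distrib]
      exact Finset.sum_congr rfl fun l _ => by ring
    rw [hexp, hQ u, hQ v] at h
    linear_combination h / 2
  have htrace : ∑ l ∈ S, φ.coef 0 l * (L.bq l l : ℂ) = n₀ * K := by
    calc ∑ l ∈ S, φ.coef 0 l * (L.bq l l : ℂ)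
        = ∑ l ∈ S, ∑ j, φ.coef 0 l *
            ((L.bq l (dualVec L j) : ℂ) * (L.bq l (Pi.single j 1) : ℂ)) := by
          refine Finset.sum_congr rfl fun l _ => ?_
          rw [← Finset.mul_sum]
          congr 1
          rw [bq_self_eq_sum]
          push_cast
          rfl
      _ = ∑ j, (L.bq (dualVec L j) (Pi.single j 1) : ℂ) * K := by
          rw [Finset.sum_comm]
          exact Finset.sum_congr rfl fun j _ => hpol _ _
      _ = n₀ * K := by
          simp [bq_comm L (dualVec L _), bq_dualVec]
  rw [htrace, hK]
  field_simp
  ring
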